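/- Let G be a finite group acting linearly on a finite-dimensional vector space V over a field k whose characteristic does not divide |G|. If the invariant ring k[V]^G is a polynomial algebra (on dim V generators), then G acts on V as a group generated by pseudo-reflections. -/

import Mathlib

open MvPolynomial

variable {k : Type*} [Field k] {r : ℕ}

/-- The algebra automorphism of `k[V] = k[X_1, …, X_r]` induced by a matrix `g`,
sending `X i` to `∑ j, g i j • X j`. -/
noncomputable def matrixAct (g : GL (Fin r) k) :
    MvPolynomial (Fin r) k →ₐ[k] MvPolynomial (Fin r) k :=
  MvPolynomial.aeval fun i => ∑ j, ((g : Matrix (Fin r) (Fin r) k) i j) • X j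

/-- `g ∈ GL(V)` is a pseudo-reflection: it has finite order, is not the identity,
and its fixed subspace has codimension 1 (equivalently `rank (g - 1) = 1`). -/
def IsPseudoReflection (g : GL (Fin r) k) : Prop :=
  IsOfFinOrder g ∧ g ≠ 1 ∧ Matrix.rank ((g : Matrix (Fin r) (Fin r) k) - 1) = 1

namespace Polynomial

/-- Coefficientwise application of a derivation, as a function. -/
noncomputable def stCoeffFun {B : Type*} [CommRing B] (E : Derivation ℤ B B) (q : B[X]) : B[X] :=
  ∑ n ∈ q.support, monomial n (E (q.coeff n))

theorem stCoeffFun_coeff {B : Type*} [CommRing B] (E : Derivation ℤ B B) (q : B[X]) (n : ℕ) :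
    (stCoeffFun E q).coeff n = E (q.coeff n) := by
  simp only [stCoeffFun, finsetSum_coeff, coeff_monomial, Finset.sum_ite_eq', mem_support_iff]
  by_cases h1 : q.coeff n = 0 <;> simp [h1]

/-- Coefficientwise extension of a derivation to polynomials. -/
noncomputable def stDerivMap {B : Type*} [CommRing B] (E : Derivation ℤ B B) :
    Derivation ℤ B[X] B[X] :=
  Derivation.mk'
    ((AddMonoidHom.toIntLinearMap
      { toFun := stCoeffFun E
        map_zero' := by
          ext n
          simp [stCoeffFun_coeff]
        map_add' := by
          intro p q
          ext n
          simp [stCoeffFun_coeff] } : B[X] →ₗ[ℤ] B[X]))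
    (by
      intro p q
      ext n
      simp only [AddMonoidHom.coe_toIntLinearMap, AddMonoidHom.coe_mk, ZeroHom.coe_mk,
        stCoeffFun_coeff, coeff_add, smul_eq_mul, coeff_mul, map_sum, Derivation.leibniz]
      rw [Finset.sum_add_distrib]
      congr 1
      conv_rhs => rw [← Finset.Nat.sum_antidiagonal_swap]
      rfl)

theorem stDerivMap_coeff {B : Type*} [CommRing B] (E : Derivation ℤ B B) (q : B[X]) (n : ℕ) :
    (stDerivMap E q).coeff n = E (q.coeff n) :=
  stCoeffFun_coeff E q n

theorem st_lift {Γ B : Type*} [Group Γ] [CommRing B] [MulSemiringAction Γ B]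
    (E : Derivation ℤ B B) (d : B) (hR : ∀ b : B, (∀ σ : Γ, σ • b = b) → d ∣ E b) :
    ∀ b : B[X], (∀ σ : Γ, σ • b = b) → C d ∣ stDerivMap E b := by
  intro b hb
  rw [C_dvd_iff_dvd_coeff]
  intro n
  rw [stDerivMap_coeff]
  apply hR
  intro σ
  rw [← coeff_smul, hb]

theorem st_etale {Γ B : Type*} [Group Γ] [Fintype Γ] [CommRing B] [DecidableEq B]
    [MulSemiringAction Γ B]
    (E : Derivation ℤ B B) (d : B) (hR : ∀ b : B, (∀ σ : Γ, σ • b = b) → d ∣ E b) (Q : B) :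
    d ∣ (∏ q ∈ (Finset.univ.image (fun σ : Γ => σ • Q)).erase Q, (Q - q)) * E Q := by
  set O := Finset.univ.image (fun σ : Γ => σ • Q) with hO
  have hQO : Q ∈ O := by
    rw [hO, Finset.mem_image]
    exact ⟨1, Finset.mem_univ _, one_smul _ _⟩
  set F : B[X] := ∏ q ∈ O, (X - C q) with hF
  have hinvF : ∀ σ : Γ, σ • F = F := by
    intro σ
    rw [hF, Finset.smul_prod']
    simp only [smul_sub, smul_X, smul_C]
    refine Finset.prod_bij (fun q _ => σ • q) ?_ ?_ ?_ ?_
    · intro q hq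
      rw [hO, Finset.mem_image] at hq ⊢
      obtain ⟨τ, -, rfl⟩ := hq
      exact ⟨σ * τ, Finset.mem_univ _, mul_smul _ _ _⟩
    · intro a _ b _ h
      exact MulAction.injective σ h
    · intro q hq
      rw [hO, Finset.mem_image] at hq
      obtain ⟨τ, -, rfl⟩ := hq
      refine ⟨(σ⁻¹ * τ) • Q, ?_, ?_⟩
      · rw [hO, Finset.mem_image]
        exact ⟨σ⁻¹ * τ, Finset.mem_univ _, rfl⟩
      · rw [mul_smul, smul_inv_smul]
    · intro q _
      rfl
  have hc : ∀ n, d ∣ E (F.coeff n) := by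
    intro n
    apply hR
    intro σ
    rw [← coeff_smul, hinvF]
  have hroot : F.eval Q = 0 := by
    rw [hF, eval_prod]
    exact Finset.prod_eq_zero hQO (by simp)
  have hder : F.derivative.eval Q = ∏ q ∈ O.erase Q, (Q - q) := by
    rw [hF, ← Finset.mul_prod_erase O _ hQO, derivative_mul]
    simp [eval_prod]
  have hE : E (F.eval Q) = (∑ n ∈ F.support, Q ^ n * E (F.coeff n)) +
      F.derivative.eval Q * E Q := by
    rw [eval_eq_sum, Polynomial.sum, map_sum, derivative_eval, Polynomial.sum, Finset.sum_mul,
      ← Finset.sum_add_distrib]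
    refine Finset.sum_congr rfl fun n _ => ?_
    rw [Derivation.leibniz, Derivation.leibniz_pow]
    simp only [smul_eq_mul, nsmul_eq_mul]
    ring
  rw [hroot, map_zero] at hE
  rw [← hder]
  have : F.derivative.eval Q * E Q = -(∑ n ∈ F.support, Q ^ n * E (F.coeff n)) := by
    linear_combination -hE
  rw [this, dvd_neg]
  exact Finset.dvd_sum fun n _ => (hc n).mul_left _

theorem st_dvd_of_prime_pow {S : Type*} [CommRing S] [IsDomain S] [UniqueFactorizationMonoid S]
    {a b : S} (ha : a ≠ 0) (h : ∀ p : S, Prime p → ∀ n : ℕ, p ^ n ∣ a → p ^ n ∣ b) : a ∣ b := by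
  rw [UniqueFactorizationMonoid.dvd_iff_emultiplicity_le ha]
  intro p hp
  rw [emultiplicity_le_emultiplicity_iff]
  exact fun n => h p hp n

/-- Coefficient extraction for the generic linear form. -/
theorem st_generic_coeff {S : Type*} [CommRing S] {r : ℕ} (a : S) (x : Fin r → S) (j : Fin r) :
    (C a + ∑ i, C (x i) * X ^ ((i : ℕ) + 1) : S[X]).coeff ((j : ℕ) + 1) = x j := by
  simp only [coeff_add, coeff_C_succ, finsetSum_coeff, coeff_C_mul, coeff_X_pow, zero_add]
  rw [Finset.sum_eq_single j]
  · simp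
  · intro b _ hb
    rw [if_neg, mul_zero]
    intro h
    exact hb (Fin.ext (by omega))
  · simp

/-- If `σ` fixes the orbit polynomial modulo a prime `π` (or `0`), then `σ` agrees modulo `π`
with an element of `H` on the generators. -/
theorem st_orbit_poly {Γ S : Type*} [Group Γ] [Fintype Γ] [CommRing S] [IsDomain S]
    [MulSemiringAction Γ S] (H : Subgroup Γ) [Fintype H] {r : ℕ} (x : Fin r → S) (a : S)
    (π : S) (hπ : Prime π ∨ π = 0) (Z : S[X])
    (hZ : Z = C a + ∑ i, C (x i) * X ^ ((i : ℕ) + 1))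
    (Q : S[X][X]) (hQ : Q = ∏ h : H, (X - C ((h : Γ) • Z))) (σ : Γ)
    (hσ : C (C π) ∣ Q - σ • Q) :
    ∃ h : H, ∀ j, π ∣ σ • x j - (h : Γ) • x j := by
  have h1 : (σ • Q).eval (σ • Z) = 0 := by
    rw [smul_eval_smul, hQ, eval_prod, Finset.prod_eq_zero (Finset.mem_univ (1 : H)), smul_zero]
    simp
  have h2 : C π ∣ ∏ h : H, (σ • Z - (h : Γ) • Z) := by
    obtain ⟨w, hw⟩ := hσ
    have := congrArg (eval (σ • Z)) hw
    rw [eval_sub, h1, sub_zero, eval_mul, eval_C, hQ, eval_prod] at this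
    simp only [eval_sub, eval_X, eval_C] at this
    rw [this]
    exact dvd_mul_right _ _
  have h3 : ∃ h : H, C π ∣ σ • Z - (h : Γ) • Z := by
    rcases hπ with hπ | rfl
    · obtain ⟨h, -, hh⟩ := ((prime_C_iff (r := π)).2 hπ).exists_mem_finset_dvd h2
      exact ⟨h, hh⟩
    · rw [C_0, zero_dvd_iff, Finset.prod_eq_zero_iff] at h2
      obtain ⟨h, -, hh⟩ := h2
      exact ⟨h, by rw [hh]; exact dvd_zero _⟩
  obtain ⟨h, hh⟩ := h3
  refine ⟨h, fun j => ?_⟩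
  have := (C_dvd_iff_dvd_coeff _ _).1 hh ((j : ℕ) + 1)
  rwa [coeff_sub, coeff_smul, coeff_smul, hZ, st_generic_coeff] at this

theorem st_orbit_poly_inv {Γ S : Type*} [Group Γ] [CommRing S]
    [MulSemiringAction Γ S] (H : Subgroup Γ) [Fintype H] (Z : S[X]) (σ : Γ) (hσ : σ ∈ H) :
    σ • (∏ h : H, (X - C ((h : Γ) • Z)) : S[X][X]) = ∏ h : H, (X - C ((h : Γ) • Z)) := by
  rw [Finset.smul_prod']
  simp only [smul_sub, smul_X, smul_C]
  refine Fintype.prod_equiv (Equiv.mulLeft (⟨σ, hσ⟩ : H)) _ _ fun h => ?_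
  simp [mul_smul]

/-- The codimension-one step: derivations extend over the invariants of `H`. -/
theorem st_codim_one {Γ S : Type*} [Group Γ] [Fintype Γ] [CommRing S] [IsDomain S]
    [UniqueFactorizationMonoid S]
    [MulSemiringAction Γ S] (H : Subgroup Γ) {r : ℕ} (x : Fin r → S)
    (hH : IsUnit (Nat.card H : S))
    (hin : ∀ π : S, Prime π → ∀ σ : Γ, (∀ j, π ∣ σ • x j - x j) → σ ∈ H)
    (E : Derivation ℤ S S) (d : S) (hd : d ≠ 0)
    (hR : ∀ b : S, (∀ σ : Γ, σ • b = b) → d ∣ E b)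
    (a : S) (ha : ∀ σ ∈ H, σ • a = a) : d ∣ E a := by
  classical
  have : Fintype H := Fintype.ofFinite H
  set Z : S[X] := C a + ∑ i, C (x i) * X ^ ((i : ℕ) + 1) with hZ
  set Q : S[X][X] := ∏ h : H, (X - C ((h : Γ) • Z)) with hQ
  refine st_dvd_of_prime_pow hd fun π hπ n hn => ?_
  have hππ : Prime (C (C π) : S[X][X]) := prime_C_iff.2 (prime_C_iff.2 hπ)
  have key := st_etale (stDerivMap (stDerivMap E)) (C (C d)) (st_lift _ _ (st_lift E d hR)) Q
  have hnot : ¬ C (C π) ∣ ∏ q ∈ (Finset.univ.image (fun σ : Γ => σ • Q)).erase Q, (Q - q) := by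
    intro hdiv
    obtain ⟨q, hq, hdq⟩ := hππ.exists_mem_finset_dvd hdiv
    rw [Finset.mem_erase, Finset.mem_image] at hq
    obtain ⟨hne, σ, -, rfl⟩ := hq
    obtain ⟨h, hh⟩ := st_orbit_poly H x a π (Or.inl hπ) Z hZ Q hQ σ hdq
    have hmem : (h : Γ)⁻¹ * σ ∈ H := by
      refine hin ((h : Γ)⁻¹ • π) ?_ _ fun j => ?_
      · exact (MulEquiv.prime_iff (MulSemiringAction.toRingEquiv Γ S (h : Γ)⁻¹)).2 hπ
      · obtain ⟨w, hw⟩ := hh j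
        refine ⟨(h : Γ)⁻¹ • w, ?_⟩
        rw [← smul_mul', ← hw, smul_sub, inv_smul_smul, mul_smul]
    have : σ ∈ H := by
      have := H.mul_mem h.2 hmem
      rwa [mul_inv_cancel_left] at this
    exact hne (st_orbit_poly_inv H Z σ this)
  have hpow : C (C π) ^ n ∣ (stDerivMap (stDerivMap E)) Q := by
    refine hππ.pow_dvd_of_dvd_mul_left n hnot (dvd_trans ?_ key)
    rw [← C_pow, ← C_pow]
    exact _root_.map_dvd C (_root_.map_dvd C hn)
  rw [← C_pow, ← C_pow, C_dvd_iff_dvd_coeff] at hpow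
  have h1 := hpow ((Finset.univ : Finset H).card - 1)
  have e1 : ((stDerivMap (stDerivMap E)) Q).coeff ((Finset.univ : Finset H).card - 1) =
      stDerivMap E (Q.coeff ((Finset.univ : Finset H).card - 1)) := stDerivMap_coeff _ _ _
  rw [e1, hQ, prod_X_sub_C_coeff_card_pred _ _ Fintype.card_pos,
    C_dvd_iff_dvd_coeff] at h1
  have h2 := h1 0
  rw [stDerivMap_coeff, coeff_neg, finsetSum_coeff] at h2
  have h3 : ∀ h : H, ((h : Γ) • Z).coeff 0 = a := by
    intro h
    rw [coeff_smul, hZ]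
    simp [finsetSum_coeff, ha h h.2]
  simp only [h3, Finset.sum_const, map_neg, dvd_neg, map_nsmul] at h2
  rw [nsmul_eq_mul, Finset.card_univ, ← Nat.card_eq_fintype_card] at h2
  exact (hH.dvd_mul_left).1 h2

/-- A derivation that kills the invariants is zero. -/
theorem st_deriv_zero {Γ S : Type*} [Group Γ] [Fintype Γ] [CommRing S] [IsDomain S]
    [MulSemiringAction Γ S] 
    (E : Derivation ℤ S S) (hR : ∀ b : S, (∀ σ : Γ, σ • b = b) → E b = 0) (a : S) : E a = 0 := by
  classical
  have key := st_etale (Γ := Γ) E 0 (fun b hb => by rw [hR b hb]) a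
  rw [zero_dvd_iff, mul_eq_zero] at key
  rcases key with h | h
  · rw [Finset.prod_eq_zero_iff] at h
    obtain ⟨q, hq, h0⟩ := h
    rw [Finset.mem_erase] at hq
    exact absurd (sub_eq_zero.1 h0).symm hq.1
  · exact h

theorem st_eq_top {Γ S : Type*} [Group Γ] [Fintype Γ] [CommRing S] [IsDomain S]
    [MulSemiringAction Γ S] (H : Subgroup Γ) {r : ℕ} (x : Fin r → S)
    (hfaith : ∀ σ : Γ, (∀ j, σ • x j = x j) → σ = 1)
    (hinv : ∀ a : S, (∀ σ ∈ H, σ • a = a) → ∀ σ : Γ, σ • a = a) (σ : Γ) : σ ∈ H := by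
  classical
  have : Fintype H := Fintype.ofFinite H
  set Z : S[X] := C 0 + ∑ i, C (x i) * X ^ ((i : ℕ) + 1) with hZ
  set Q : S[X][X] := ∏ h : H, (X - C ((h : Γ) • Z)) with hQ
  have hσQ : σ • Q = Q := by
    ext m n
    rw [coeff_smul, coeff_smul]
    refine hinv _ (fun τ hτ => ?_) σ
    rw [← coeff_smul, ← coeff_smul, hQ, st_orbit_poly_inv H Z τ hτ]
  obtain ⟨h, hh⟩ := st_orbit_poly H x 0 0 (Or.inr rfl) Z hZ Q hQ σ (by rw [hσQ, sub_self]; simp)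
  have : (h : Γ)⁻¹ * σ = 1 := by
    apply hfaith
    intro j
    have := hh j
    rw [zero_dvd_iff, sub_eq_zero] at this
    rw [mul_smul, this, inv_smul_smul]
  have h' : σ = h := by
    rw [inv_mul_eq_one] at this
    exact this.symm
  rw [h']
  exact h.2

end Polynomial

section ConcretePart

theorem st_act_X (g : GL (Fin r) k) (i : Fin r) :
    matrixAct g (X i) = ∑ j, ((g : Matrix (Fin r) (Fin r) k) i j) • X j := by
  simp [matrixAct]

theorem st_act_mul (g h : GL (Fin r) k) (a : MvPolynomial (Fin r) k) :
    matrixAct g (matrixAct h a) = matrixAct (h * g) a := by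
  have : (matrixAct g).comp (matrixAct h) = matrixAct (h * g) := by
    apply MvPolynomial.algHom_ext
    intro i
    simp only [AlgHom.comp_apply, st_act_X, map_sum, map_smul, Units.val_mul, Matrix.mul_apply,
      Finset.smul_sum, Finset.sum_smul, smul_smul]
    exact Finset.sum_comm
  exact DFunLike.congr_fun this a

theorem st_act_one (a : MvPolynomial (Fin r) k) : matrixAct (1 : GL (Fin r) k) a = a := by
  have : matrixAct (1 : GL (Fin r) k) = AlgHom.id k _ := by
    apply MvPolynomial.algHom_ext
    intro i
    simp [st_act_X, Matrix.one_apply]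
  rw [this]
  rfl

/-- The left action of a group of matrices on polynomials. -/
@[reducible] noncomputable def stAction (Γ : Subgroup (GL (Fin r) k)) :
    MulSemiringAction Γ (MvPolynomial (Fin r) k) where
  smul σ a := matrixAct (σ : GL (Fin r) k)⁻¹ a
  one_smul a := by
    change matrixAct ((1 : Γ) : GL (Fin r) k)⁻¹ a = a
    simp [st_act_one]
  mul_smul σ τ a := by
    change matrixAct ((σ * τ : Γ) : GL (Fin r) k)⁻¹ a =
      matrixAct (σ : GL (Fin r) k)⁻¹ (matrixAct (τ : GL (Fin r) k)⁻¹ a)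
    rw [st_act_mul]
    simp
  smul_zero σ := map_zero _
  smul_add σ a b := map_add _ a b
  smul_one σ := map_one _
  smul_mul σ a b := map_mul _ a b

theorem st_act_isHomogeneous (g : GL (Fin r) k) {a : MvPolynomial (Fin r) k} {n : ℕ}
    (ha : a.IsHomogeneous n) : (matrixAct g a).IsHomogeneous n := by
  have := ha.aeval (fun i => (∑ j, ((g : Matrix (Fin r) (Fin r) k) i j) • X j : MvPolynomial (Fin r) k))
    (n := 1) (fun i => by
      refine IsHomogeneous.sum _ _ _ fun j _ => ?_
      rw [MvPolynomial.smul_eq_C_mul]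
      simpa using (isHomogeneous_C (Fin r) _).mul (isHomogeneous_X k j))
  simpa [matrixAct] using this

theorem st_act_component (g : GL (Fin r) k) (a : MvPolynomial (Fin r) k) (n : ℕ) :
    homogeneousComponent n (matrixAct g a) = matrixAct g (homogeneousComponent n a) := by
  conv_lhs => rw [← sum_homogeneousComponent a, map_sum, map_sum]
  have h : ∀ i, homogeneousComponent n (matrixAct g (homogeneousComponent i a)) =
      if n = i then matrixAct g (homogeneousComponent i a) else 0 := by
    intro i
    have := st_act_isHomogeneous g (homogeneousComponent_isHomogeneous i a)
    rw [homogeneousComponent_of_mem ((mem_homogeneousSubmodule _ _).2 this)]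
  simp only [h]
  rw [Finset.sum_ite_eq]
  split_ifs with hn
  · rfl
  · rw [homogeneousComponent_eq_zero, map_zero]
    simpa using hn

theorem st_chain (g : GL (Fin r) k) (j : Fin r) (a : MvPolynomial (Fin r) k) :
    pderiv j (matrixAct g a) =
      ∑ l, matrixAct g (pderiv l a) * C ((g : Matrix (Fin r) (Fin r) k) l j) := by
  induction a using MvPolynomial.induction_on with
  | C c => simp [← MvPolynomial.algebraMap_eq]
  | add p q hp hq =>
    simp only [map_add, hp, hq, add_mul, Finset.sum_add_distrib]
  | mul_X p i hp =>
    have hX : pderiv j (matrixAct g (X i)) = C ((g : Matrix (Fin r) (Fin r) k) i j) := by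
      rw [st_act_X, map_sum]
      simp [pderiv_X, Pi.single_apply, MvPolynomial.smul_eq_C_mul]
    have hs : ∑ l, matrixAct g p * matrixAct g (pderiv l (X i)) *
        C ((g : Matrix (Fin r) (Fin r) k) l j) =
        matrixAct g p * C ((g : Matrix (Fin r) (Fin r) k) i j) := by
      rw [Finset.sum_eq_single i]
      · simp
      · intro b _ hb
        rw [pderiv_X_of_ne hb.symm]
        simp
      · simp
    simp only [map_mul, pderiv_mul, map_add, hp, hX, add_mul, Finset.sum_add_distrib, hs]
    congr 1
    rw [Finset.sum_mul]
    exact Finset.sum_congr rfl fun l _ => by ring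

theorem st_act_sub_coeff (g : GL (Fin r) k) (j i : Fin r) :
    (matrixAct g (X j) - X j).coeff (Finsupp.single i 1) =
      ((g : Matrix (Fin r) (Fin r) k) - 1) j i := by
  classical
  rw [st_act_X, coeff_sub, coeff_sum]
  simp [coeff_X, Matrix.one_apply, Finsupp.single_left_inj, eq_comm]

theorem st_faithful (g : GL (Fin r) k) (h : ∀ j, matrixAct g (X j) = X j) : g = 1 := by
  apply Units.ext
  rw [Units.val_one, ← sub_eq_zero]
  ext j i
  rw [← st_act_sub_coeff, h, sub_self]
  simp

theorem st_inertia (g : GL (Fin r) k) (π : MvPolynomial (Fin r) k) (hπ : Prime π)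
    (h : ∀ j, π ∣ matrixAct g (X j) - X j) (hg : g ≠ 1) :
    Matrix.rank ((g : Matrix (Fin r) (Fin r) k) - 1) = 1 := by
  have hπdeg : 1 ≤ π.totalDegree := by
    by_contra hlt
    have h0 : π.totalDegree = 0 := by omega
    rw [totalDegree_eq_zero_iff_eq_C] at h0
    apply hπ.not_isUnit
    rw [h0]
    refine IsUnit.map C (isUnit_iff_ne_zero.2 fun hc => hπ.ne_zero ?_)
    rw [h0, hc, C_0]
  have hc : ∀ j, ∃ c : k, matrixAct g (X j) - X j = C c * π := by
    intro j
    obtain ⟨w, hw⟩ := h j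
    by_cases hw0 : w = 0
    · exact ⟨0, by rw [hw, hw0]; simp⟩
    have hdeg : (matrixAct g (X j) - X j).totalDegree ≤ 1 :=
      ((st_act_isHomogeneous g (isHomogeneous_X k j)).sub (isHomogeneous_X k j)).totalDegree_le
    rw [hw, totalDegree_mul_of_isDomain hπ.ne_zero hw0] at hdeg
    have hwd : w.totalDegree = 0 := by omega
    rw [totalDegree_eq_zero_iff_eq_C] at hwd
    exact ⟨w.coeff 0, by rw [hw, mul_comm, ← hwd]⟩
  choose c hc using hc
  have hM : (g : Matrix (Fin r) (Fin r) k) - 1 =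
      Matrix.vecMulVec c (fun i => π.coeff (Finsupp.single i 1)) := by
    ext j i
    rw [← st_act_sub_coeff, hc, coeff_C_mul, Matrix.vecMulVec_apply]
  apply le_antisymm
  · rw [hM]
    exact Matrix.rank_vecMulVec_le _ _
  · rw [Nat.one_le_iff_ne_zero]
    intro h0
    rw [Matrix.rank, Module.finrank_eq_zero_iff_of_free, Submodule.subsingleton_iff_eq_bot, LinearMap.range_eq_bot] at h0
    apply hg
    apply Units.ext
    rw [Units.val_one, ← sub_eq_zero]
    ext i j
    have := congrFun (LinearMap.congr_fun h0 (Pi.single j 1)) i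
    simpa [Matrix.one_apply, Pi.single_apply] using this

end ConcretePart

section FrobeniusPart

theorem st_exists_functional {K V : Type*} [Field K] [AddCommGroup V] [Module K V] (v : V)
    (hv : v ≠ 0) : ∃ φ : V →+ K, (∀ (c : K) (w : V), φ (c • w) = c * φ w) ∧ φ v ≠ 0 := by
  by_contra hcon
  push Not at hcon
  apply hv
  rw [← Module.forall_dual_apply_eq_zero_iff K]
  intro φ
  exact hcon φ.toAddMonoidHom (fun c w => by simp)

theorem st_exists_frob_functional (p : ℕ) [Fact p.Prime] [CharP k p] (v : k) (hv : v ≠ 0) :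
    ∃ φ : k →+ k, (∀ c w : k, φ (c ^ p * w) = c * φ w) ∧ φ v ≠ 0 :=
  @st_exists_functional k k _ _ (Module.compHom k (frobenius k p)) v hv

/-- Apply an additive map to all coefficients. -/
noncomputable def stCoeffMap (ψ : k →+ k) (b : MvPolynomial (Fin r) k) : MvPolynomial (Fin r) k :=
  ∑ m ∈ b.support, monomial m (ψ (b.coeff m))

theorem stCoeffMap_coeff (ψ : k →+ k) (b : MvPolynomial (Fin r) k) (m : Fin r →₀ ℕ) :
    (stCoeffMap ψ b).coeff m = ψ (b.coeff m) := by
  classical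
  simp only [stCoeffMap, coeff_sum, coeff_monomial, Finset.sum_ite_eq', mem_support_iff]
  by_cases h1 : b.coeff m = 0 <;> simp [h1]

theorem stCoeffMap_add (ψ : k →+ k) (a b : MvPolynomial (Fin r) k) :
    stCoeffMap ψ (a + b) = stCoeffMap ψ a + stCoeffMap ψ b := by
  ext m
  simp [stCoeffMap_coeff]

theorem stCoeffMap_zero (ψ : k →+ k) :
    stCoeffMap ψ (0 : MvPolynomial (Fin r) k) = 0 := by
  ext m
  simp [stCoeffMap_coeff]

theorem stCoeffMap_sum {ι : Type*} (ψ : k →+ k) (s : Finset ι)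
    (b : ι → MvPolynomial (Fin r) k) :
    stCoeffMap ψ (∑ i ∈ s, b i) = ∑ i ∈ s, stCoeffMap ψ (b i) := by
  ext m
  simp [stCoeffMap_coeff, coeff_sum]

/-- The Frobenius twist of the action. -/
noncomputable def stTwist (p : ℕ) (g : GL (Fin r) k) :
    MvPolynomial (Fin r) k →ₐ[k] MvPolynomial (Fin r) k :=
  MvPolynomial.aeval fun i => ∑ j, ((g : Matrix (Fin r) (Fin r) k) i j ^ p) • X j

theorem st_act_expand (p : ℕ) [Fact p.Prime] [CharP k p] (g : GL (Fin r) k)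
    (b : MvPolynomial (Fin r) k) :
    matrixAct g (expand p b) = expand p (stTwist p g b) := by
  have : (matrixAct g).comp (expand p) = (expand p).comp (stTwist p g) := by
    apply MvPolynomial.algHom_ext
    intro i
    simp only [AlgHom.comp_apply, expand_X, map_pow, st_act_X, stTwist, aeval_X, map_sum, map_smul]
    rw [sum_pow_char]
    simp [smul_pow]
  exact DFunLike.congr_fun this b

theorem st_twist_map (p : ℕ) [Fact p.Prime] [CharP k p] (g : GL (Fin r) k)
    (u : MvPolynomial (Fin r) k) :
    stTwist p g (map (frobenius k p) u) = map (frobenius k p) (matrixAct g u) := by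
  have : ((stTwist p g : MvPolynomial (Fin r) k →ₐ[k] MvPolynomial (Fin r) k) :
      MvPolynomial (Fin r) k →+* MvPolynomial (Fin r) k).comp (map (frobenius k p)) =
      (map (frobenius k p)).comp ((matrixAct g : MvPolynomial (Fin r) k →ₐ[k]
        MvPolynomial (Fin r) k) : MvPolynomial (Fin r) k →+* MvPolynomial (Fin r) k) := by
    apply MvPolynomial.ringHom_ext
    · intro c
      simp [← MvPolynomial.algebraMap_eq]
    · intro i
      simp [st_act_X, stTwist, MvPolynomial.smul_eq_C_mul, frobenius_def]
  exact DFunLike.congr_fun this u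

theorem st_coeffMap_mul (p : ℕ) [Fact p.Prime] [CharP k p] (ψ : k →+ k)
    (hψ : ∀ c w : k, ψ (c ^ p * w) = c * ψ w) (c : k) (v : MvPolynomial (Fin r) k) :
    stCoeffMap ψ (C c * map (frobenius k p) v) = C (ψ c) * v := by
  ext m
  rw [stCoeffMap_coeff, coeff_C_mul, coeff_C_mul, coeff_map, frobenius_def, mul_comm, hψ, mul_comm]

theorem st_coeffMap_twist (p : ℕ) [Fact p.Prime] [CharP k p] (ψ : k →+ k)
    (hψ : ∀ c w : k, ψ (c ^ p * w) = c * ψ w) (g : GL (Fin r) k) (b : MvPolynomial (Fin r) k) :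
    stCoeffMap ψ (stTwist p g b) = matrixAct g (stCoeffMap ψ b) := by
  induction b using MvPolynomial.induction_on' with
  | add a b ha hb => rw [map_add, stCoeffMap_add, ha, hb, stCoeffMap_add, map_add]
  | monomial m c =>
    have h1 : (monomial m c : MvPolynomial (Fin r) k) =
        C c * map (frobenius k p) (monomial m 1) := by
      simp [C_mul_monomial]
    rw [h1, map_mul, st_twist_map, st_coeffMap_mul p ψ hψ, map_mul]
    rw [← MvPolynomial.algebraMap_eq, AlgHom.commutes, MvPolynomial.algebraMap_eq,
      st_coeffMap_mul p ψ hψ, ← MvPolynomial.algebraMap_eq, AlgHom.commutes]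

theorem st_dvd_of_pderiv (p : ℕ) [CharP k p] (a : MvPolynomial (Fin r) k)
    (ha : ∀ j, pderiv j a = 0) (m : Fin r →₀ ℕ) (hm : a.coeff m ≠ 0) (j : Fin r) : p ∣ m j := by
  by_cases h0 : m j = 0
  · rw [h0]; exact dvd_zero _
  have h1 : m - Finsupp.single j 1 + Finsupp.single j 1 = m := by
    apply tsub_add_cancel_of_le
    rw [Finsupp.single_le_iff]
    omega
  have h2 := coeff_pderiv (i := j) a (m - Finsupp.single j 1)
  rw [ha j, h1, coeff_zero] at h2
  have h3 := (mul_eq_zero.1 h2.symm).resolve_left hm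
  have h4 : ((m j : ℕ) : k) = 0 := by
    rw [← h3]
    have : m j = (m - Finsupp.single j 1 : Fin r →₀ ℕ) j + 1 := by
      simp
      omega
    rw [this]
    push_cast
    rfl
  exact (CharP.cast_eq_zero_iff k p (m j)).1 h4

theorem st_exists_expand (p : ℕ) (a : MvPolynomial (Fin r) k)
    (ha : ∀ m, a.coeff m ≠ 0 → ∀ j, p ∣ m j) : ∃ b, expand p b = a := by
  refine ⟨∑ m ∈ a.support, monomial (m.mapRange (fun t => t / p) (Nat.zero_div p)) (a.coeff m), ?_⟩
  rw [map_sum]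
  conv_rhs => rw [← support_sum_monomial_coeff a]
  refine Finset.sum_congr rfl fun m hm => ?_
  rw [expand_monomial]
  congr 2
  ext j
  simp [Nat.mul_div_cancel' (ha m (mem_support_iff.1 hm) j)]

/-- The predicate: `H`-invariant with zero `Γ`-trace. -/
def StP (H Γ : Subgroup (GL (Fin r) k)) [Fintype Γ] (a : MvPolynomial (Fin r) k) : Prop :=
  (∀ h ∈ H, matrixAct h a = a) ∧ ∑ σ : Γ, matrixAct (σ : GL (Fin r) k) a = 0

theorem stP_component (H Γ : Subgroup (GL (Fin r) k)) [Fintype Γ] (a : MvPolynomial (Fin r) k)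
    (ha : StP H Γ a) (n : ℕ) : StP H Γ (homogeneousComponent n a) := by
  refine ⟨fun h hh => ?_, ?_⟩
  · rw [← st_act_component, ha.1 h hh]
  · simp only [← st_act_component]
    rw [← map_sum, ha.2, map_zero]

theorem st_frob_step (p : ℕ) [Fact p.Prime] [CharP k p] (H Γ : Subgroup (GL (Fin r) k))
    [Fintype Γ] (a : MvPolynomial (Fin r) k) (ha : StP H Γ a) (n : ℕ) (hn : 0 < n)
    (hom : a.IsHomogeneous n) (hder : ∀ j, pderiv j a = 0) (ha0 : a ≠ 0) :
    ∃ c n', n' < n ∧ StP H Γ c ∧ c.IsHomogeneous n' ∧ c ≠ 0 := by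
  have hp : p.Prime := Fact.out
  obtain ⟨b, rfl⟩ := st_exists_expand p a (st_dvd_of_pderiv p a hder)
  have hb0 : b ≠ 0 := by
    rintro rfl
    exact ha0 (map_zero _)
  obtain ⟨m, hm⟩ := ne_zero_iff.1 hb0
  obtain ⟨ψ, hψ, hψm⟩ := st_exists_frob_functional p _ hm
  have hinj := expand_injective (R := k) (σ := Fin r) hp.pos
  refine ⟨stCoeffMap ψ b, n / p, Nat.div_lt_self hn hp.one_lt, ⟨fun h hh => ?_, ?_⟩, ?_, ?_⟩
  · rw [← st_coeffMap_twist p ψ hψ]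
    congr 1
    apply hinj
    rw [← st_act_expand, ha.1 h hh]
  · simp only [← st_coeffMap_twist p ψ hψ]
    rw [← stCoeffMap_sum]
    have : ∑ σ : Γ, stTwist p (σ : GL (Fin r) k) b = 0 := by
      apply hinj
      rw [map_sum, map_zero]
      simp only [← st_act_expand]
      exact ha.2
    rw [this, stCoeffMap_zero]
  · intro d hd
    rw [stCoeffMap_coeff] at hd
    have hbd : b.coeff d ≠ 0 := by
      intro h
      rw [h, map_zero] at hd
      exact hd rfl
    rw [← coeff_expand_smul p hp.ne_zero] at hbd
    have := hom hbd
    rw [map_nsmul, smul_eq_mul] at this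
    rw [← this, Nat.mul_div_cancel_left _ hp.pos]
  · rw [ne_zero_iff]
    exact ⟨m, by rwa [stCoeffMap_coeff]⟩

theorem st_P_zero (H Γ : Subgroup (GL (Fin r) k)) [Fintype Γ]
    (hcard : (Fintype.card Γ : k) ≠ 0) (f : Fin r → MvPolynomial (Fin r) k)
    (hD : ∀ a, StP H Γ a → ∃ b : Fin r → MvPolynomial (Fin r) k, (∀ i, StP H Γ (b i)) ∧
      ∀ j, pderiv j a = ∑ i, b i * pderiv j (f i))
    (a : MvPolynomial (Fin r) k) (ha : StP H Γ a) : a = 0 := by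
  have key : ∀ n : ℕ, ∀ a, StP H Γ a → a.IsHomogeneous n → a = 0 := by
    intro n
    induction n using Nat.strong_induction_on with
    | _ n ih =>
    intro a ha hom
    rcases Nat.eq_zero_or_pos n with rfl | hn
    · obtain ⟨c, rfl⟩ : ∃ c, a = C c := ⟨_, totalDegree_eq_zero_iff_eq_C.1
        (Nat.le_zero.1 hom.totalDegree_le)⟩
      have := ha.2
      simp only [← MvPolynomial.algebraMap_eq, AlgHom.commutes] at this
      rw [Finset.sum_const, Finset.card_univ, ← map_nsmul, MvPolynomial.algebraMap_eq,
        C_eq_zero, nsmul_eq_mul, mul_eq_zero] at this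
      rw [this.resolve_left hcard, C_0]
    have hlow : ∀ b, StP H Γ b → ∀ m, m < n → homogeneousComponent m b = 0 := fun b hb m hm =>
      ih m hm _ (stP_component H Γ b hb m) (homogeneousComponent_isHomogeneous m b)
    have hcoef : ∀ b, StP H Γ b → ∀ d : Fin r →₀ ℕ, d.degree < n → b.coeff d = 0 := by
      intro b hb d hd
      have := congrArg (coeff d) (hlow b hb d.degree hd)
      rwa [coeff_homogeneousComponent, if_pos rfl, coeff_zero] at this
    obtain ⟨b, hb, hba⟩ := hD a ha
    have hder : ∀ j, pderiv j a = 0 := by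
      intro j
      ext d
      rw [coeff_zero]
      by_cases hd : d.degree < n
      · rw [hba, coeff_sum]
        refine Finset.sum_eq_zero fun i _ => ?_
        rw [coeff_mul]
        refine Finset.sum_eq_zero fun x hx => ?_
        rw [hcoef _ (hb i), zero_mul]
        rw [Finset.HasAntidiagonal.mem_antidiagonal] at hx
        have : d.degree = x.1.degree + x.2.degree := by rw [← hx, map_add]
        omega
      · rw [coeff_pderiv]
        have : a.coeff (d + Finsupp.single j 1) = 0 := by
          apply hom.coeff_eq_zero
          rw [map_add, Finsupp.degree_single]
          omega
        rw [this, zero_mul]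
    by_contra ha0
    obtain ⟨q, hq⟩ := CharP.exists k
    rcases CharP.char_is_prime_or_zero k q with hp | rfl
    · have : Fact q.Prime := ⟨hp⟩
      obtain ⟨c, n', hn', hc, hhom, hc0⟩ := st_frob_step q H Γ a ha n hn hom hder ha0
      exact hc0 (ih n' hn' c hc hhom)
    · obtain ⟨m, hm⟩ := ne_zero_iff.1 ha0
      have h1 : m = 0 := by
        ext j
        simpa using st_dvd_of_pderiv 0 a hder m hm j
      have h2 := hom hm
      rw [h1, map_zero] at h2
      omega
  rw [← sum_homogeneousComponent a]
  exact Finset.sum_eq_zero fun n _ =>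
    key n _ (stP_component H Γ a ha n) (homogeneousComponent_isHomogeneous n a)

end FrobeniusPart

section MainPart

theorem st_deriv_dvd_adjoin (E : Derivation k (MvPolynomial (Fin r) k) (MvPolynomial (Fin r) k))
    (d : MvPolynomial (Fin r) k) (f : Fin r → MvPolynomial (Fin r) k) (hf : ∀ l, d ∣ E (f l))
    (a : MvPolynomial (Fin r) k) (ha : a ∈ Algebra.adjoin k (Set.range f)) : d ∣ E a := by
  induction ha using Algebra.adjoin_induction with
  | mem x hx =>
    obtain ⟨l, rfl⟩ := hx
    exact hf l
  | algebraMap c => simp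
  | add x y _ _ hx hy =>
    rw [map_add]
    exact dvd_add hx hy
  | mul x y _ _ hx hy =>
    rw [Derivation.leibniz, smul_eq_mul, smul_eq_mul]
    exact dvd_add (hy.mul_left _) (hx.mul_left _)

/-- The Jacobian matrix. -/
noncomputable def stJac (f : Fin r → MvPolynomial (Fin r) k) :
    Matrix (Fin r) (Fin r) (MvPolynomial (Fin r) k) :=
  Matrix.of fun i j => pderiv j (f i)

/-- The derivation with given components. -/
noncomputable def stVec (v : Fin r → MvPolynomial (Fin r) k) :
    Derivation k (MvPolynomial (Fin r) k) (MvPolynomial (Fin r) k) :=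
  ∑ j, v j • pderiv j

theorem stVec_apply (v : Fin r → MvPolynomial (Fin r) k) (a : MvPolynomial (Fin r) k) :
    stVec v a = ∑ j, v j * pderiv j a := by
  have h := congrFun (map_sum (Derivation.coeFnAddMonoidHom (R := k) (A := MvPolynomial (Fin r) k)
    (M := MvPolynomial (Fin r) k)) (fun j => v j • pderiv j) Finset.univ) a
  rw [Finset.sum_apply] at h
  exact h

theorem st_invariants (Γ : Subgroup (GL (Fin r) k)) (f : Fin r → MvPolynomial (Fin r) k)
    (hinv : ∀ h : MvPolynomial (Fin r) k,
      (∀ σ ∈ Γ, matrixAct σ h = h) → h ∈ Algebra.adjoin k (Set.range f))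
    (b : MvPolynomial (Fin r) k) (hb : ∀ σ : Γ, (stAction Γ).smul σ b = b) :
    b ∈ Algebra.adjoin k (Set.range f) := by
  apply hinv
  intro σ hσ
  have : matrixAct (σ⁻¹)⁻¹ b = b := hb ⟨σ⁻¹, Γ.inv_mem hσ⟩
  rwa [inv_inv] at this

theorem st_jac_ne_zero (Γ : Subgroup (GL (Fin r) k)) [Fintype Γ]
    (f : Fin r → MvPolynomial (Fin r) k)
    (hinv : ∀ h : MvPolynomial (Fin r) k,
      (∀ σ ∈ Γ, matrixAct σ h = h) → h ∈ Algebra.adjoin k (Set.range f)) :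
    (stJac f).det ≠ 0 := by
  intro h0
  obtain ⟨v, hv, hMv⟩ := Matrix.exists_mulVec_eq_zero_iff.2 h0
  apply hv
  let _ := stAction Γ
  have hz := Polynomial.st_deriv_zero (Γ := Γ) ((stVec v).restrictScalars ℤ) (fun b hb => by
    have hmem := st_invariants Γ f hinv b hb
    have := st_deriv_dvd_adjoin (stVec v) 0 f (fun l => by
      rw [zero_dvd_iff, stVec_apply]
      have := congrFun hMv l
      simp only [Matrix.mulVec, dotProduct, stJac, Matrix.of_apply, Pi.zero_apply] at this
      rw [← this]
      exact Finset.sum_congr rfl fun j _ => mul_comm _ _) b hmem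
    exact zero_dvd_iff.1 this)
  ext1 j
  have hj : stVec v (X j) = 0 := hz (X j)
  rw [stVec_apply, Finset.sum_eq_single j] at hj
  · simpa using hj
  · intro i _ hi
    rw [pderiv_X_of_ne hi.symm, mul_zero]
  · simp

/-- Coordinates of the gradient with respect to the gradients of the `f i` are unique. -/
theorem st_unique (f : Fin r → MvPolynomial (Fin r) k) (hJ : (stJac f).det ≠ 0)
    (b c : Fin r → MvPolynomial (Fin r) k)
    (h : ∀ j, ∑ i, b i * pderiv j (f i) = ∑ i, c i * pderiv j (f i)) : b = c := by
  rw [← sub_eq_zero]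
  refine Matrix.eq_zero_of_vecMul_eq_zero hJ ?_
  ext1 j
  simp only [Matrix.vecMul, dotProduct, stJac, Matrix.of_apply, Pi.zero_apply, Pi.sub_apply,
    sub_mul, Finset.sum_sub_distrib]
  rw [h j, sub_self]

/-- If the gradient of `a` has coordinates `b`, the gradient of `g a` has coordinates `g b`. -/
theorem st_equivariant (f : Fin r → MvPolynomial (Fin r) k) (g : GL (Fin r) k)
    (hf : ∀ i, matrixAct g (f i) = f i) (a : MvPolynomial (Fin r) k)
    (b : Fin r → MvPolynomial (Fin r) k) (hb : ∀ j, pderiv j a = ∑ i, b i * pderiv j (f i))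
    (j : Fin r) :
    pderiv j (matrixAct g a) = ∑ i, matrixAct g (b i) * pderiv j (f i) := by
  have h1 : ∀ i, pderiv j (f i) =
      ∑ l, matrixAct g (pderiv l (f i)) * C ((g : Matrix (Fin r) (Fin r) k) l j) := by
    intro i
    rw [← st_chain, hf]
  rw [st_chain]
  simp only [hb, map_sum, map_mul, Finset.sum_mul]
  rw [Finset.sum_comm]
  refine Finset.sum_congr rfl fun i _ => ?_
  rw [h1 i, Finset.mul_sum]
  exact Finset.sum_congr rfl fun l _ => mul_assoc _ _ _

theorem st_main (Γ K : Subgroup (GL (Fin r) k)) [Finite Γ] (hcard : (Nat.card Γ : k) ≠ 0)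
    (f : Fin r → MvPolynomial (Fin r) k) (hKΓ : K ≤ Γ)
    (hK : ∀ g ∈ Γ, Matrix.rank ((g : Matrix (Fin r) (Fin r) k) - 1) = 1 → g ∈ K)
    (hinv : ∀ h : MvPolynomial (Fin r) k,
      (∀ σ ∈ Γ, matrixAct σ h = h) ↔ h ∈ Algebra.adjoin k (Set.range f)) :
    K = Γ := by
  have : Fintype Γ := Fintype.ofFinite Γ
  let _ := stAction Γ
  have hsmul : ∀ (σ : Γ) (a : MvPolynomial (Fin r) k),
      σ • a = matrixAct (σ : GL (Fin r) k)⁻¹ a := fun _ _ => rfl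
  have hJ := st_jac_ne_zero Γ f (fun h => (hinv h).1)
  have hf : ∀ g ∈ Γ, ∀ i, matrixAct g (f i) = f i := fun g hg i =>
    (hinv (f i)).2 (Algebra.subset_adjoin ⟨i, rfl⟩) g hg
  set H : Subgroup Γ := K.subgroupOf Γ with hH
  have hcardH : IsUnit (Nat.card H : MvPolynomial (Fin r) k) := by
    have h1 : (Nat.card H : k) ≠ 0 := by
      intro h0
      obtain ⟨c, hc⟩ := H.card_subgroup_dvd_card
      apply hcard
      rw [hc, Nat.cast_mul, h0, zero_mul]
    have := (isUnit_iff_ne_zero.2 h1).map (C : k →+* MvPolynomial (Fin r) k)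
    rwa [map_natCast] at this
  have hin : ∀ π : MvPolynomial (Fin r) k, Prime π → ∀ σ : Γ,
      (∀ j, π ∣ σ • (X j : MvPolynomial (Fin r) k) - X j) → σ ∈ H := by
    intro π hπ σ hσ
    rw [hH, Subgroup.mem_subgroupOf, ← K.inv_mem_iff]
    by_cases h1 : (σ : GL (Fin r) k)⁻¹ = 1
    · rw [h1]
      exact K.one_mem
    · exact hK _ (Γ.inv_mem σ.2) (st_inertia _ π hπ hσ h1)
  have hD : ∀ a, StP K Γ a → ∃ b : Fin r → MvPolynomial (Fin r) k, (∀ i, StP K Γ (b i)) ∧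
      ∀ j, pderiv j a = ∑ i, b i * pderiv j (f i) := by
    intro a ha
    have hdiv : ∀ i, (stJac f).det ∣ stVec (fun j => (stJac f).adjugate j i) a := by
      intro i
      refine Polynomial.st_codim_one H (fun j => (X j : MvPolynomial (Fin r) k)) hcardH hin
        ((stVec (fun j => (stJac f).adjugate j i)).restrictScalars ℤ) _ hJ ?_ a ?_
      · intro b hb
        refine st_deriv_dvd_adjoin (stVec (fun j => (stJac f).adjugate j i)) _ f (fun l => ?_) b
          (st_invariants Γ f (fun h => (hinv h).1) b hb)
        rw [stVec_apply]
        have h1 := congrFun (congrFun (Matrix.mul_adjugate (stJac f)) l) i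
        rw [Matrix.mul_apply] at h1
        have h2 : ∑ j, (stJac f).adjugate j i * pderiv j (f l) =
            ((stJac f).det • (1 : Matrix (Fin r) (Fin r) (MvPolynomial (Fin r) k))) l i := by
          rw [← h1]
          exact Finset.sum_congr rfl fun j _ => mul_comm _ _
        rw [h2, Matrix.smul_apply, smul_eq_mul]
        exact dvd_mul_right _ _
      · intro σ hσ
        rw [hH, Subgroup.mem_subgroupOf] at hσ
        exact ha.1 _ (K.inv_mem hσ)
    choose b hb using hdiv
    have hgrad : ∀ j, pderiv j a = ∑ i, b i * pderiv j (f i) := by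
      intro j
      apply mul_left_cancel₀ hJ
      rw [Finset.mul_sum]
      have h1 : ∀ i, (stJac f).det * (b i * pderiv j (f i)) =
          ∑ l, pderiv l a * ((stJac f).adjugate l i * stJac f i j) := by
        intro i
        rw [← mul_assoc, ← hb i, stVec_apply, Finset.sum_mul]
        refine Finset.sum_congr rfl fun l _ => ?_
        change _ * _ * pderiv j (f i) = _ * (_ * pderiv j (f i))
        ring
      simp only [h1]
      rw [Finset.sum_comm]
      simp only [← Finset.mul_sum, ← Matrix.mul_apply, Matrix.adjugate_mul]
      rw [Finset.sum_eq_single j]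
      · simp [mul_comm]
      · intro l _ hl
        simp [Matrix.one_apply_ne hl]
      · simp
    refine ⟨b, fun i => ⟨fun h hh => ?_, ?_⟩, hgrad⟩
    · have := st_unique f hJ (fun i => matrixAct h (b i)) b (fun j => by
        rw [← st_equivariant f h (hf h (hKΓ hh)) a b hgrad, ha.1 h hh, hgrad])
      exact congrFun this i
    · have := st_unique f hJ (fun i => ∑ σ : Γ, matrixAct (σ : GL (Fin r) k) (b i)) 0 (fun j => by
        simp only [Finset.sum_mul, Pi.zero_apply, zero_mul, Finset.sum_const_zero]
        rw [Finset.sum_comm]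
        simp only [← st_equivariant f _ (hf _ (Subtype.prop _)) a b hgrad]
        rw [← map_sum, ha.2, map_zero])
      exact congrFun this i
  have hzero := st_P_zero K Γ (by rwa [← Nat.card_eq_fintype_card]) f hD
  have hKinv : ∀ a : MvPolynomial (Fin r) k, (∀ g ∈ K, matrixAct g a = a) →
      ∀ g ∈ Γ, matrixAct g a = a := by
    intro a ha
    set T := ∑ σ : Γ, matrixAct (σ : GL (Fin r) k) a with hT
    have hTinv : ∀ g ∈ Γ, matrixAct g T = T := by
      intro g hg
      rw [hT, map_sum]
      simp only [st_act_mul]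
      exact Fintype.sum_equiv (Equiv.mulRight (⟨g, hg⟩ : Γ)) _ _ fun σ => rfl
    have hP : StP K Γ (a - (Nat.card Γ : k)⁻¹ • T) := by
      refine ⟨fun h hh => ?_, ?_⟩
      · rw [map_sub, map_smul, ha h hh, hTinv h (hKΓ hh)]
      · simp only [map_sub, map_smul, Finset.sum_sub_distrib]
        rw [← hT, ← Finset.smul_sum]
        have : ∑ σ : Γ, matrixAct (σ : GL (Fin r) k) T = (Nat.card Γ : k) • T := by
          rw [Finset.sum_congr rfl fun σ _ => hTinv _ σ.2, Finset.sum_const, Finset.card_univ,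
            ← Nat.card_eq_fintype_card, Nat.cast_smul_eq_nsmul]
        rw [this, smul_smul, inv_mul_cancel₀ hcard, one_smul, sub_self]
    have h0 := sub_eq_zero.1 (hzero _ hP)
    intro g hg
    rw [h0, map_smul, hTinv g hg]
  refine le_antisymm hKΓ fun g hg => ?_
  have := Polynomial.st_eq_top H (fun j => (X j : MvPolynomial (Fin r) k)) (fun σ hσ => by
      have := st_faithful _ hσ
      rw [inv_eq_one] at this
      exact Subtype.ext this)
    (fun a ha σ => hKinv a (fun g hg => by
      have := ha ⟨g⁻¹, Γ.inv_mem (hKΓ hg)⟩ (by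
        rw [hH, Subgroup.mem_subgroupOf]
        exact K.inv_mem hg)
      rw [hsmul] at this
      simpa using this) _ (Γ.inv_mem σ.2)) ⟨g, hg⟩
  rwa [hH, Subgroup.mem_subgroupOf] at this

end MainPart

/-- One direction of the Shephard–Todd–Chevalley theorem: if a finite group `G` acts
linearly on `V = k^r`, with `char k` not dividing `|G|`, and the invariant ring
`k[V]^G` is a polynomial algebra on `r = dim V` generators, then `G` acts on `V` as a
group generated by pseudo-reflections. -/
theorem reflection_group_of_polynomial_invariants
    (G : Type*) [Group G] [Finite G] (hchar : ¬ (ringChar k : ℕ) ∣ Nat.card G)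
    (ρ : G →* GL (Fin r) k) (f : Fin r → MvPolynomial (Fin r) k)
    (hind : AlgebraicIndependent k f)
    (hinv : ∀ h : MvPolynomial (Fin r) k,
      (∀ g : G, matrixAct (ρ g) h = h) ↔ h ∈ Algebra.adjoin k (Set.range f)) :
    Subgroup.closure {g | g ∈ ρ.range ∧ IsPseudoReflection g} = ρ.range := by
  have hfin : Finite ρ.range :=
    Finite.of_surjective ρ.rangeRestrict ρ.rangeRestrict_surjective
  have hcard : (Nat.card ρ.range : k) ≠ 0 := by
    intro h0
    exact hchar (((ringChar.spec k _).1 h0).trans (Subgroup.card_range_dvd ρ))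
  refine st_main ρ.range _ hcard f ?_ ?_ ?_
  · rw [Subgroup.closure_le]
    exact fun g hg => hg.1
  · intro g hg hrank
    apply Subgroup.subset_closure
    refine ⟨hg, ?_, ?_, hrank⟩
    · exact MonoidHom.isOfFinOrder ρ.range.subtype (isOfFinOrder_of_finite (⟨g, hg⟩ : ρ.range))
    · rintro rfl
      simp at hrank
  · intro h
    rw [← hinv h]
    constructor
    · exact fun H g => H _ ⟨g, rfl⟩
    · rintro H _ ⟨g, rfl⟩
      exact H g
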